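/- Under the same OCELAD weight construction (convex losses ℓ_t on a convex set Θ ⊆ ℝ^n; per-interval learner outputs θ_t(I); η_I = min{1/2, 1/√|I|}; weights w̃_t(I) and w_t(I) defined by the multiplicative recursion w̃_{t+1}(I) = w̃_t(I)(1 + η_I ρ_t r_t(I)) on I; ensemble estimate θ̂_t equal to the w_t-weighted average of the active θ_t(I); estimated regret r_t(I) = ℓ_t(θ̂_t) − ℓ_t(θ_t(I)); and normalization ρ_t = 1 / max_{I∈ACT(t)} |r_t(I)|), for every dyadic interval I = [q,s] ∈ 𝓘 one has Σ_{t=q}^{s} ρ_t r_t(I) ≤ 5 ln(s+1) √|I|. -/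

import Mathlib

/-!
This is the potential argument for multiplicative weights with sleeping experts, each dyadic
interval being an expert that is awake exactly on itself. Give an expert weight `1` before it wakes
up and a constant weight after it falls asleep. By Jensen's inequality the `w_t`-weighted sum of the
regrets of the awake experts is nonpositive, so the total weight of a family of experts never
exceeds its cardinality. Since `log (1 + x) ≥ x - x²` for `x ≥ -1/2`, an expert with total gain `G`
on `S` ends with weight at least `exp (η G - η² |S|)`, whence `G ≤ log N / η + η |S|` for a family
of `N` experts. At most `T²` dyadic intervals start by time `T = s + 1`, and `η = η_I` balances the
two terms.
-/

open Finset

/-- The dyadic interval indexed by `(j, k)` (with `k ≥ 1`):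
the integer interval `[k·2^j, (k+1)·2^j − 1]`, which has `2^j` elements. -/
def dyadicI (j k : ℕ) : Finset ℕ := Finset.Icc (k * 2 ^ j) ((k + 1) * 2 ^ j - 1)

/-- `ACT t`: the (indices of the) dyadic intervals containing `t`.  Any dyadic
interval `(j, k)` containing `t ≥ 1` has `j ≤ log₂ t` and `1 ≤ k ≤ t`, so this
finite set is exactly `{I ∈ 𝓘 : t ∈ I}`. -/
def ACT (t : ℕ) : Finset (ℕ × ℕ) :=
  ((Finset.Iic (Nat.log 2 t)) ×ˢ (Finset.Icc 1 t)).filter fun p => t ∈ dyadicI p.1 p.2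

/-- The OCELAD learning rate of a dyadic interval of length `2^j`:
`η_I = min {1/2, 1/√|I|}`. -/
noncomputable def ηI (j : ℕ) : ℝ := min (1 / 2) (1 / Real.sqrt (2 ^ j))

section Inequalities

variable {ι : Type*}

lemma sub_sq_le_log_one_add {x : ℝ} (hx : -(1 / 2) ≤ x) : x - x ^ 2 ≤ Real.log (1 + x) := by
  have one_le_mul_exp : 1 ≤ (1 + x) * Real.exp (x ^ 2 - x) := by
    rcases le_total 0 x with hx0 | hx0
    · calc
        1 ≤ (1 + x) * (x ^ 2 - x + 1) := by nlinarith [pow_nonneg hx0 3]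
        _ ≤ (1 + x) * Real.exp (x ^ 2 - x) := by gcongr; exact Real.add_one_le_exp _
    · have hcubic : 0 ≤ 1 + x - x ^ 2 + x ^ 3 := by
        nlinarith [mul_nonneg (sq_nonneg x) (neg_le_iff_add_nonneg.1 hx)]
      calc
        1 ≤ (1 + x) * (1 + (x ^ 2 - x) + (x ^ 2 - x) ^ 2 / 2) := by
          linarith [mul_nonneg (sq_nonneg x) hcubic]
        _ ≤ (1 + x) * Real.exp (x ^ 2 - x) := by
          gcongr
          · linarith
          · exact Real.quadratic_le_exp_of_nonneg (by nlinarith)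
  have hlog := Real.log_nonneg one_le_mul_exp
  rw [Real.log_mul (by linarith) (Real.exp_ne_zero _), Real.log_exp] at hlog
  linarith

lemma sum_sub_sq_le_log_prod_one_add {s : Finset ι} {x : ι → ℝ}
    (hx : ∀ i ∈ s, -(1 / 2) ≤ x i) :
    ∑ i ∈ s, (x i - x i ^ 2) ≤ Real.log (∏ i ∈ s, (1 + x i)) := by
  rw [Real.log_prod fun i hi => by linarith [hx i hi]]
  exact sum_le_sum fun i hi => sub_sq_le_log_one_add (hx i hi)

lemma sum_mul_map_centerMass_sub_nonpos {𝕜 E : Type*} [Field 𝕜] [LinearOrder 𝕜]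
    [IsStrictOrderedRing 𝕜] [AddCommGroup E] [Module 𝕜 E] {C : Set E} {f : E → 𝕜}
    (hf : ConvexOn 𝕜 C f) {s : Finset ι} {w : ι → 𝕜} {p : ι → E} (hw : ∀ i ∈ s, 0 ≤ w i)
    (hp : ∀ i ∈ s, p i ∈ C) : ∑ i ∈ s, w i * (f (s.centerMass w p) - f (p i)) ≤ 0 := by
  rcases (sum_nonneg hw).eq_or_lt with hW | hW
  · have hw0 := (sum_eq_zero_iff_of_nonneg hw).1 hW.symm
    exact (sum_eq_zero fun i hi => by rw [hw0 i hi, zero_mul]).le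
  · have jensen : f (s.centerMass w p) ≤ (∑ i ∈ s, w i * f (p i)) / ∑ i ∈ s, w i :=
      (hf.map_centerMass_le hw hW hp).trans_eq (inv_mul_eq_div _ _)
    simpa only [mul_sub, sum_sub_distrib, ← sum_mul, sub_nonpos, mul_comm]
      using (le_div_iff₀ hW).1 jensen

lemma nonneg_and_abs_mul_le_one_of_normalizer {s : Finset ι} {f : ι → ℝ} {c : ℝ}
    (hc : ((∀ i ∈ s, f i = 0) → c = 1) ∧
      ((∃ i ∈ s, f i ≠ 0) → ∃ i ∈ s, c = |f i|⁻¹ ∧ ∀ j ∈ s, |f j| ≤ |f i|)) :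
    0 ≤ c ∧ ∀ i ∈ s, |c * f i| ≤ 1 := by
  by_cases hf : ∃ i ∈ s, f i ≠ 0
  · obtain ⟨i, -, rfl, hmax⟩ := hc.2 hf
    refine ⟨by positivity, fun j hj => ?_⟩
    rw [abs_mul, abs_inv, abs_abs]
    exact inv_mul_le_one_of_le₀ (hmax j hj) (abs_nonneg _)
  · push Not at hf
    rw [hc.1 hf]
    exact ⟨zero_le_one, fun i hi => by simp [hf i hi]⟩

end Inequalities

section SleepingExperts

/-- The multiplicative weight at time `t` of a sleeping expert with learning rate `η` and gains `x`
that is awake at the times in `S`. With `S = I` it is the OCELAD weight `w̃_t(I)`, except that it is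
`1` instead of `0` before `I` starts, so that an interval that starts does not add to the total
weight. -/
def multiplicativeWeight (η : ℝ) (S : Finset ℕ) (x : ℕ → ℝ) (t : ℕ) : ℝ :=
  ∏ τ ∈ S with τ < t, (1 + η * x τ)

lemma multiplicativeWeight_pos {η : ℝ} {S : Finset ℕ} {x : ℕ → ℝ}
    (hη0 : 0 ≤ η) (hη1 : η < 1) (hx : ∀ τ ∈ S, |x τ| ≤ 1) (t : ℕ) :
    0 < multiplicativeWeight η S x t :=
  prod_pos fun τ hτ => by nlinarith [neg_le_of_abs_le (hx τ (mem_filter.1 hτ).1)]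

lemma multiplicativeWeight_eq_prod {S : Finset ℕ} {t : ℕ} (hS : S ⊆ range t) (η : ℝ)
    (x : ℕ → ℝ) : multiplicativeWeight η S x t = ∏ τ ∈ S, (1 + η * x τ) := by
  rw [multiplicativeWeight, filter_true_of_mem fun τ hτ => mem_range.1 (hS hτ)]

lemma multiplicativeWeight_succ (η : ℝ) (S : Finset ℕ) (x : ℕ → ℝ) (t : ℕ) :
    multiplicativeWeight η S x (t + 1) = multiplicativeWeight η S x t +
      if t ∈ S then η * multiplicativeWeight η S x t * x t else 0 := by
  have hsplit : {τ ∈ S | τ < t + 1} = {τ ∈ S | τ = t} ∪ {τ ∈ S | τ < t} := by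
    rw [← filter_or]
    simp only [Nat.lt_succ_iff_lt_or_eq, or_comm]
  have hdisj : Disjoint {τ ∈ S | τ = t} {τ ∈ S | τ < t} :=
    disjoint_filter.2 fun _ _ h => h.not_lt
  rw [multiplicativeWeight, hsplit, prod_union hdisj, filter_eq', ← multiplicativeWeight]
  split_ifs
  · rw [prod_singleton]
    ring
  · rw [prod_empty, one_mul, add_zero]

lemma eq_multiplicativeWeight_Ico {η : ℝ} {x v : ℕ → ℝ} {q T : ℕ} (hinit : v q = 1)
    (hrec : ∀ t ∈ Ico q T, v (t + 1) = v t * (1 + η * x t)) {t : ℕ} (hqt : q ≤ t) (htT : t ≤ T) :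
    v t = multiplicativeWeight η (Ico q T) x t := by
  induction t, hqt using Nat.le_induction with
  | base =>
    rw [hinit, multiplicativeWeight, filter_false_of_mem, prod_empty]
    exact fun τ hτ => (mem_Ico.1 hτ).1.not_gt
  | succ t hqt ih =>
    have ht : t ∈ Ico q T := mem_Ico.2 ⟨hqt, htT⟩
    rw [hrec t ht, multiplicativeWeight_succ, if_pos ht, ih (by omega)]
    ring

variable {ι : Type*} {A : Finset ι} {η : ι → ℝ} {S : ι → Finset ℕ} {x : ι → ℕ → ℝ} {T : ℕ}

lemma sum_multiplicativeWeight_le_card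
    (hmix : ∀ t < T, ∑ i ∈ A with t ∈ S i,
      η i * multiplicativeWeight (η i) (S i) (x i) t * x i t ≤ 0) :
    ∑ i ∈ A, multiplicativeWeight (η i) (S i) (x i) T ≤ #A := by
  induction T with
  | zero => simp [multiplicativeWeight]
  | succ T ih =>
    simp only [multiplicativeWeight_succ, sum_add_distrib, ← sum_filter]
    linarith [hmix T T.lt_succ_self, ih fun t ht => hmix t (ht.trans T.lt_succ_self)]

theorem sleeping_experts_regret_le (hη_pos : ∀ i ∈ A, 0 < η i) (hη_le : ∀ i ∈ A, η i ≤ 1 / 2)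
    (hx : ∀ i ∈ A, ∀ t ∈ S i, |x i t| ≤ 1)
    (hmix : ∀ t < T, ∑ i ∈ A with t ∈ S i,
      η i * multiplicativeWeight (η i) (S i) (x i) t * x i t ≤ 0)
    {i : ι} (hi : i ∈ A) (hS : S i ⊆ range T) :
    ∑ t ∈ S i, x i t ≤ Real.log #A / η i + η i * #(S i) := by
  have hstep : ∀ t ∈ S i, |η i * x i t| ≤ η i := fun t ht => by
    rw [abs_mul, abs_of_pos (hη_pos i hi)]
    exact mul_le_of_le_one_right (hη_pos i hi).le (hx i hi t ht)
  have hstep_ge : ∀ t ∈ S i, -(1 / 2) ≤ η i * x i t := fun t ht => by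
    linarith [neg_le_of_abs_le (hstep t ht), hη_le i hi]
  have hpos : ∀ i ∈ A, 0 < multiplicativeWeight (η i) (S i) (x i) T := fun i hi =>
    multiplicativeWeight_pos (hη_pos i hi).le (by linarith [hη_le i hi]) (hx i hi) T
  have hlog : η i * ∑ t ∈ S i, x i t - η i ^ 2 * #(S i) ≤ Real.log #A := calc
    _ = ∑ t ∈ S i, (η i * x i t - η i ^ 2) := by
      rw [sum_sub_distrib, mul_sum, sum_const, nsmul_eq_mul, mul_comm (η i ^ 2)]
    _ ≤ ∑ t ∈ S i, (η i * x i t - (η i * x i t) ^ 2) :=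
      sum_le_sum fun t ht => sub_le_sub_left
        (sq_le_sq.2 ((hstep t ht).trans (le_abs_self _))) _
    _ ≤ Real.log (multiplicativeWeight (η i) (S i) (x i) T) := by
      rw [multiplicativeWeight_eq_prod hS]
      exact sum_sub_sq_le_log_prod_one_add hstep_ge
    _ ≤ Real.log #A := Real.log_le_log (hpos i hi) <|
      (single_le_sum (fun i hi => (hpos i hi).le) hi).trans (sum_multiplicativeWeight_le_card hmix)
  rw [← sub_le_iff_le_add, le_div_iff₀ (hη_pos i hi)]
  linarith

end SleepingExperts

section DyadicIntervals

lemma dyadicI_eq_Ico (j k : ℕ) : dyadicI j k = Ico (k * 2 ^ j) ((k + 1) * 2 ^ j) :=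
  Icc_sub_one_right_eq_Ico_of_not_isMin (by simp) _

lemma card_dyadicI (j k : ℕ) : #(dyadicI j k) = 2 ^ j := by
  rw [dyadicI_eq_Ico, Nat.card_Ico, add_mul, one_mul, Nat.add_sub_cancel_left]

/-- A finite family of indices `(j, k)` that contains every dyadic interval starting at or before
time `T`; it serves as the family of experts up to time `T`. -/
def dyadicIndices (T : ℕ) : Finset (ℕ × ℕ) := Iic (Nat.log 2 T) ×ˢ Icc 1 T

lemma card_dyadicIndices_le (T : ℕ) : #(dyadicIndices T) ≤ T ^ 2 := by
  rcases T.eq_zero_or_pos with rfl | hT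
  · simp [dyadicIndices]
  · rw [dyadicIndices, card_product, Nat.card_Iic, Nat.card_Icc, Nat.add_sub_cancel, sq]
    exact Nat.mul_le_mul_right _ (Nat.log_lt_self 2 hT.ne')

lemma mem_dyadicIndices_of_mul_pow_le {j k T : ℕ} (hk : 1 ≤ k) (hT : k * 2 ^ j ≤ T) :
    (j, k) ∈ dyadicIndices T := by
  have hj : 2 ^ j ≤ T := (Nat.le_mul_of_pos_left _ hk).trans hT
  have hkT : k ≤ T := (Nat.le_mul_of_pos_right _ (by positivity)).trans hT
  simp only [dyadicIndices, mem_product, mem_Iic, mem_Icc]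
  exact ⟨Nat.le_log_of_pow_le one_lt_two hj, hk, hkT⟩

lemma one_le_of_mem_dyadicIndices {p : ℕ × ℕ} {T : ℕ} (hp : p ∈ dyadicIndices T) : 1 ≤ p.2 :=
  (mem_Icc.1 (mem_product.1 hp).2).1

lemma mem_dyadicIndices_iff_of_mem_dyadicI {p : ℕ × ℕ} {t T : ℕ} (ht : t ∈ dyadicI p.1 p.2)
    (htT : t ≤ T) : p ∈ dyadicIndices T ↔ 1 ≤ p.2 :=
  ⟨one_le_of_mem_dyadicIndices,
    fun hk => mem_dyadicIndices_of_mul_pow_le hk ((mem_Icc.1 ht).1.trans htT)⟩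

lemma mem_ACT {p : ℕ × ℕ} {t : ℕ} : p ∈ ACT t ↔ 1 ≤ p.2 ∧ t ∈ dyadicI p.1 p.2 :=
  mem_filter.trans (and_congr_left fun ht => mem_dyadicIndices_iff_of_mem_dyadicI ht le_rfl)

lemma one_le_of_mem_ACT {p : ℕ × ℕ} {t : ℕ} (hp : p ∈ ACT t) : 1 ≤ t :=
  have hp2 := mem_Icc.1 (mem_product.1 (mem_filter.1 hp).1).2
  hp2.1.trans hp2.2

lemma ACT_eq_filter_dyadicIndices {t T : ℕ} (htT : t ≤ T) :
    ACT t = {p ∈ dyadicIndices T | t ∈ dyadicI p.1 p.2} := by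
  ext p
  rw [mem_ACT, mem_filter]
  exact and_congr_left fun ht => (mem_dyadicIndices_iff_of_mem_dyadicI ht htT).symm

end DyadicIntervals

section LearningRate

lemma ηI_pos (j : ℕ) : 0 < ηI j := lt_min (by norm_num) (by positivity)

lemma ηI_le_half (j : ℕ) : ηI j ≤ 1 / 2 := min_le_left _ _

lemma inv_ηI_le (j : ℕ) : (ηI j)⁻¹ ≤ 2 * √(2 ^ j) := by
  have hsqrt : 1 ≤ √((2 : ℝ) ^ j) := Real.one_le_sqrt.2 (one_le_pow₀ one_le_two)
  refine inv_le_of_inv_le₀ (by positivity) (le_min ?_ ?_) <;> rw [← one_div] <;>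
    exact one_div_le_one_div_of_le (by positivity) (by linarith)

lemma ηI_mul_sqrt_le (j : ℕ) : ηI j * √(2 ^ j) ≤ (j + 1) * Real.log 2 := by
  have hlog2 := Real.log_two_gt_d9
  rcases j.eq_zero_or_pos with rfl | hj
  · simp only [pow_zero, Real.sqrt_one, mul_one, CharP.cast_eq_zero, zero_add, one_mul]
    linarith [ηI_le_half 0]
  · have hj' : (1 : ℝ) ≤ j := by exact_mod_cast hj
    calc ηI j * √(2 ^ j) ≤ 1 / √(2 ^ j) * √(2 ^ j) := by gcongr; exact min_le_right _ _
      _ = 1 := one_div_mul_cancel (by positivity)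
      _ ≤ (j + 1) * Real.log 2 := by nlinarith

lemma two_mul_div_ηI_add_ηI_mul_le {j : ℕ} {L : ℝ} (hL : (j + 1) * Real.log 2 ≤ L) :
    2 * L / ηI j + ηI j * 2 ^ j ≤ 5 * L * √(2 ^ j) := by
  have hL0 : 0 ≤ L := le_trans (by positivity) hL
  calc 2 * L / ηI j + ηI j * 2 ^ j = 2 * L * (ηI j)⁻¹ + ηI j * √(2 ^ j) * √(2 ^ j) := by
        rw [mul_assoc (ηI j), Real.mul_self_sqrt (by positivity), div_eq_mul_inv]
    _ ≤ 2 * L * (2 * √(2 ^ j)) + L * √(2 ^ j) := by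
        gcongr
        · exact inv_ηI_le j
        · exact (ηI_mul_sqrt_le j).trans hL
    _ = 5 * L * √(2 ^ j) := by ring

end LearningRate

theorem sum_dyadicI_le_of_mixture {x : ℕ × ℕ → ℕ → ℝ} (hx : ∀ t, ∀ p ∈ ACT t, |x p t| ≤ 1)
    (hmix : ∀ t, ∑ p ∈ ACT t,
      ηI p.1 * multiplicativeWeight (ηI p.1) (dyadicI p.1 p.2) (x p) t * x p t ≤ 0)
    {j k : ℕ} (hk : 1 ≤ k) :
    ∑ t ∈ dyadicI j k, x (j, k) t ≤ 5 * Real.log ((k + 1) * 2 ^ j : ℕ) * √(2 ^ j) := by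
  set T := (k + 1) * 2 ^ j with hT
  have hmem : (j, k) ∈ dyadicIndices T :=
    mem_dyadicIndices_of_mul_pow_le hk (Nat.mul_le_mul_right _ k.le_succ)
  have hcard : Real.log #(dyadicIndices T) ≤ 2 * Real.log T := by
    rw [← Nat.cast_two, ← Real.log_pow]
    refine Real.log_le_log (by exact_mod_cast card_pos.2 ⟨_, hmem⟩) ?_
    exact_mod_cast card_dyadicIndices_le T
  have hlog : (j + 1) * Real.log 2 ≤ Real.log T := by
    rw [← Nat.cast_succ, ← Real.log_pow]
    refine Real.log_le_log (by positivity) ?_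
    rw [hT, pow_succ']
    exact_mod_cast Nat.mul_le_mul_right _ (Nat.succ_le_succ hk)
  calc ∑ t ∈ dyadicI j k, x (j, k) t
      ≤ Real.log #(dyadicIndices T) / ηI j + ηI j * #(dyadicI j k) := by
        refine sleeping_experts_regret_le (η := fun p : ℕ × ℕ => ηI p.1)
          (S := fun p => dyadicI p.1 p.2) (T := T) (fun p _ => ηI_pos p.1)
          (fun p _ => ηI_le_half p.1) ?_ ?_ hmem ?_
        · exact fun p hp t ht => hx t p (mem_ACT.2 ⟨one_le_of_mem_dyadicIndices hp, ht⟩)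
        · exact fun t ht => ACT_eq_filter_dyadicIndices ht.le ▸ hmix t
        · exact dyadicI_eq_Ico j k ▸ fun t ht => mem_range.2 (mem_Ico.1 ht).2
    _ ≤ 2 * Real.log T / ηI j + ηI j * 2 ^ j := by
        rw [card_dyadicI, Nat.cast_pow, Nat.cast_two]
        gcongr
        exact (ηI_pos j).le
    _ ≤ 5 * Real.log T * √(2 ^ j) := two_mul_div_ηI_add_ηI_mul_le hlog

theorem ocelad_per_interval_weighted_regret_general {E : Type*} [AddCommGroup E] [Module ℝ E]
    {Θ : Set E} {ℓ : ℕ → E → ℝ} (hℓconv : ∀ t, ConvexOn ℝ Θ (ℓ t)) {θL : ℕ × ℕ → ℕ → E}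
    (hθL : ∀ j k, 1 ≤ k → ∀ t ∈ dyadicI j k, θL (j, k) t ∈ Θ)
    {wt w : ℕ × ℕ → ℕ → ℝ} {θhat : ℕ → E} {r : ℕ × ℕ → ℕ → ℝ} {ρ : ℕ → ℝ}
    (hwt_init : ∀ j k, 1 ≤ k → wt (j, k) (k * 2 ^ j) = 1)
    (hwt_rec : ∀ j k, 1 ≤ k → ∀ t ∈ dyadicI j k,
      wt (j, k) (t + 1) = wt (j, k) t * (1 + ηI j * ρ t * r (j, k) t))
    (hw : ∀ j k, 1 ≤ k → ∀ t,
      w (j, k) t = if t ∈ dyadicI j k then ηI j * wt (j, k) t else 0)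
    (hθhat : ∀ t, 1 ≤ t →
      θhat t = (∑ I ∈ ACT t, w I t)⁻¹ • ∑ I ∈ ACT t, w I t • θL I t)
    (hr : ∀ I t, r I t = ℓ t (θhat t) - ℓ t (θL I t))
    (hρ : ∀ t, 1 ≤ t → 0 ≤ ρ t ∧ ∀ I ∈ ACT t, |ρ t * r I t| ≤ 1) (j k : ℕ) (hk : 1 ≤ k) :
    ∑ t ∈ dyadicI j k, ρ t * r (j, k) t ≤
      5 * Real.log ((k + 1) * 2 ^ j : ℕ) * √(2 ^ j) := by
  set x : ℕ × ℕ → ℕ → ℝ := fun I t => ρ t * r I t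
  have hx : ∀ t, ∀ I ∈ ACT t, |x I t| ≤ 1 := fun t I hI => (hρ t (one_le_of_mem_ACT hI)).2 I hI
  have hweight : ∀ t, ∀ I ∈ ACT t,
      w I t = ηI I.1 * multiplicativeWeight (ηI I.1) (dyadicI I.1 I.2) (x I) t := by
    rintro t ⟨a, b⟩ hI
    obtain ⟨hb, ht⟩ := mem_ACT.1 hI
    rw [hw a b hb, if_pos ht]
    simp only [dyadicI_eq_Ico, mul_assoc, mem_Ico] at hwt_rec ht ⊢
    rw [eq_multiplicativeWeight_Ico (hwt_init a b hb)
      (fun t ht => hwt_rec a b hb t (mem_Ico.1 ht)) ht.1 ht.2.le]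
  have hw_nonneg : ∀ t, ∀ I ∈ ACT t, 0 ≤ w I t := fun t I hI => by
    have hmwu := multiplicativeWeight_pos (ηI_pos I.1).le (by linarith [ηI_le_half I.1])
      (fun τ hτ => hx τ I (mem_ACT.2 ⟨(mem_ACT.1 hI).1, hτ⟩)) t
    exact hweight t I hI ▸ (mul_pos (ηI_pos I.1) hmwu).le
  refine sum_dyadicI_le_of_mixture hx (fun t => ?_) hk
  rcases (ACT t).eq_empty_or_nonempty with hempty | ⟨I₀, hI₀⟩
  · rw [hempty, sum_empty]
  have ht := one_le_of_mem_ACT hI₀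
  have jensen := sum_mul_map_centerMass_sub_nonpos (hℓconv t) (hw_nonneg t)
    fun I hI => hθL I.1 I.2 (mem_ACT.1 hI).1 t (mem_ACT.1 hI).2
  calc ∑ I ∈ ACT t, ηI I.1 * multiplicativeWeight (ηI I.1) (dyadicI I.1 I.2) (x I) t * x I t
      = ρ t * ∑ I ∈ ACT t, w I t * (ℓ t (θhat t) - ℓ t (θL I t)) := by
        rw [mul_sum]
        refine sum_congr rfl fun I hI => ?_
        rw [← hweight t I hI, ← hr]
        ring
    _ ≤ 0 := mul_nonpos_of_nonneg_of_nonpos (hρ t ht).1 (hθhat t ht ▸ jensen)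

/-- **Lemma 2.**  Under the OCELAD weight construction (unnormalized weights
`w̃_t(I)` multiplicatively updated by `1 + η_I ρ_t r_t(I)` on `I`; active
weights `w_t(I) = η_I w̃_t(I)`; ensemble estimate `θ̂_t` the `w_t`-weighted
average of the active learners; estimated regrets
`r_t(I) = ℓ_t(θ̂_t) − ℓ_t(θ_t(I))`; normalization
`ρ_t = 1 / max_{I∈ACT(t)} |r_t(I)|`), every dyadic interval `I = [q, s]`,
with `q = k·2^j` and `s + 1 = (k+1)·2^j`, satisfies
`∑_{t=q}^{s} ρ_t r_t(I) ≤ 5 ln(s+1) √|I|`. -/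
theorem ocelad_per_interval_weighted_regret
    (n : ℕ) (hn : 1 ≤ n)
    (Θ : Set (EuclideanSpace ℝ (Fin n))) (hΘ : Convex ℝ Θ)
    (ℓ : ℕ → EuclideanSpace ℝ (Fin n) → ℝ)
    (hℓconv : ∀ t, ConvexOn ℝ Θ (ℓ t))
    (θL : ℕ × ℕ → ℕ → EuclideanSpace ℝ (Fin n))
    (hθL : ∀ j k, 1 ≤ k → ∀ t ∈ dyadicI j k, θL (j, k) t ∈ Θ)
    (wt : ℕ × ℕ → ℕ → ℝ)    -- the unnormalized weights `w̃`
    (w : ℕ × ℕ → ℕ → ℝ)     -- the active-learner weights `w`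
    (θhat : ℕ → EuclideanSpace ℝ (Fin n))
    (r : ℕ × ℕ → ℕ → ℝ) (ρ : ℕ → ℝ)
    -- definition of `w̃`
    (hwt_zero : ∀ j k, 1 ≤ k → ∀ t < k * 2 ^ j, wt (j, k) t = 0)
    (hwt_init : ∀ j k, 1 ≤ k → wt (j, k) (k * 2 ^ j) = 1)
    (hwt_rec : ∀ j k, 1 ≤ k → ∀ t ∈ dyadicI j k,
      wt (j, k) (t + 1) = wt (j, k) t * (1 + ηI j * ρ t * r (j, k) t))
    (hwt_frozen : ∀ j k, 1 ≤ k → ∀ t, (k + 1) * 2 ^ j ≤ t →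
      wt (j, k) t = wt (j, k) ((k + 1) * 2 ^ j))
    -- `w_t(I) = η_I w̃_t(I)` for `t ∈ I`, and `0` otherwise
    (hw : ∀ j k, 1 ≤ k → ∀ t,
      w (j, k) t = if t ∈ dyadicI j k then ηI j * wt (j, k) t else 0)
    -- the ensemble estimate is the weighted average of the active learners
    (hθhat : ∀ t, 1 ≤ t →
      θhat t = (∑ I ∈ ACT t, w I t)⁻¹ • ∑ I ∈ ACT t, w I t • θL I t)
    -- the estimated regrets
    (hr : ∀ I t, r I t = ℓ t (θhat t) - ℓ t (θL I t))
    -- `ρ_t = 1 / max_{I ∈ ACT(t)} |r_t(I)|`, with `ρ_t = 1` if the max is `0`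
    (hρ : ∀ t, 1 ≤ t →
      ((∀ I ∈ ACT t, r I t = 0) → ρ t = 1) ∧
      ((∃ I ∈ ACT t, r I t ≠ 0) →
        ∃ I ∈ ACT t, ρ t = |r I t|⁻¹ ∧ ∀ J ∈ ACT t, |r J t| ≤ |r I t|)) :
    ∀ j k : ℕ, 1 ≤ k →
      (∑ t ∈ dyadicI j k, ρ t * r (j, k) t) ≤
        5 * Real.log (((k + 1) * 2 ^ j : ℕ)) * Real.sqrt ((2 : ℝ) ^ j) :=
  ocelad_per_interval_weighted_regret_general hℓconv hθL hwt_init hwt_rec hw hθhat hr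
    fun t ht => nonneg_and_abs_mul_le_one_of_normalizer (hρ t ht)
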